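/- Fix nonnegative reals m₀₀, m₁₁, m₂₂, m₃₃ summing to 1 and e_p ∈ [0,1], and suppose there exists at least one two-qubit density matrix with diagonal (m₀₀, m₁₁, m₂₂, m₃₃) in the computational basis satisfying Tr(Π_x⁻ρ) = e_p. Then the infimum of C(Φ(ρ)) over all two-qubit density matrices ρ with diagonal (m₀₀, m₁₁, m₂₂, m₃₃) and Tr(Π_x⁻ρ) = e_p equals the infimum of C(ρ(a,b)) over all real numbers a, b with a + b = 1/2 − e_p, |a| ≤ √(m₀₀m₃₃) and |b| ≤ √(m₁₁m₂₂). (This gives the improved BB84 key rate K = C(ρ(ā,b̄)) − H(e_b) with (ā,b̄) the minimizer.) -/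

import Mathlib

/-!
Dephasing keeps only the two parity blocks of `ρ`, so `dephase ρ` consists of two Hermitian `2 × 2`
blocks with the prescribed diagonal and off-diagonal entries `α = ρ₀₀,₁₁` and `β = ρ₀₁,₁₀`
(`xState`, `dephase_eq_xState`). A block with diagonal `(p, q)` and off-diagonal entry `z` has
eigenvalues `(p + q) / 2 ± √(((p - q) / 2)² + |z|²)`, so by concavity of `x ↦ -x log x` the entropy
decreases, and the coherence increases, with `|z|` (`relEntCoh_mono`).

The constraint `Tr(Π_x⁻ ρ) = e_p` reads `Re α + Re β = 1/2 - e_p` (`trace_PiXMinus_mul`), and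
positivity gives `|α|² ≤ m₀₀ m₃₃` and `|β|² ≤ m₁₁ m₂₂`. Replacing `α`, `β` by their real parts
therefore stays feasible and does not raise the coherence. Conversely every admissible `ρ(a, b)` is
itself a density matrix fixed by the dephasing, so the second set of values is contained in the
first, while each value of the first dominates one of the second; the two infima agree.
-/

open Matrix Complex Kronecker
open scoped ComplexOrder

noncomputable section

/-- von Neumann entropy (base 2), via eigenvalues; junk value 0 if not Hermitian. -/
noncomputable def vnEntropy {n : Type*} [Fintype n] [DecidableEq n] (ρ : Matrix n n ℂ) : ℝ :=
  if h : ρ.IsHermitian then -∑ i, h.eigenvalues i * Real.logb 2 (h.eigenvalues i) else 0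

/-- The diagonal part of a matrix. -/
def diagPart {n : Type*} [Fintype n] [DecidableEq n] (ρ : Matrix n n ℂ) : Matrix n n ℂ :=
  Matrix.diagonal fun i => ρ i i

/-- Relative entropy of coherence in the computational basis. -/
noncomputable def relEntCoh {n : Type*} [Fintype n] [DecidableEq n] (ρ : Matrix n n ℂ) : ℝ :=
  vnEntropy (diagPart ρ) - vnEntropy ρ

/-- A density matrix: positive semidefinite with trace one. -/
def IsDensity {n : Type*} [Fintype n] [DecidableEq n] (ρ : Matrix n n ℂ) : Prop :=
  ρ.PosSemidef ∧ ρ.trace = 1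

/-- Two-qubit index type: the first component is qubit A, the second is qubit B. -/
abbrev Q2 := Fin 2 × Fin 2

/-- Z-parity projector Π⁺ = |00⟩⟨00| + |11⟩⟨11|. -/
def PiPlus : Matrix Q2 Q2 ℂ := Matrix.diagonal fun i => if i.1 = i.2 then 1 else 0

/-- Z-parity projector Π⁻ = |01⟩⟨01| + |10⟩⟨10|. -/
def PiMinus : Matrix Q2 Q2 ℂ := Matrix.diagonal fun i => if i.1 = i.2 then 0 else 1

/-- Partial dephasing channel Φ(ρ) = Π⁺ρΠ⁺ + Π⁻ρΠ⁻. -/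
def dephase (ρ : Matrix Q2 Q2 ℂ) : Matrix Q2 Q2 ℂ :=
  PiPlus * ρ * PiPlus + PiMinus * ρ * PiMinus

/-- Binary entropy (base 2). -/
noncomputable def binEnt (e : ℝ) : ℝ := -(e * Real.logb 2 e) - (1 - e) * Real.logb 2 (1 - e)

/-- X-basis projector Π_x⁻ = |+−⟩⟨+−| + |−+⟩⟨−+|, written entrywise. -/
def PiXMinus : Matrix Q2 Q2 ℂ :=
  Matrix.of fun i j => (1/4 : ℂ) *
    ((if i.1 = j.1 then 1 else -1) + (if i.2 = j.2 then 1 else -1))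

/-- phase i^a for a : Fin 2 -/
def yph : Fin 2 → ℂ := fun a => if a = 0 then 1 else Complex.I

/-- Y-basis projector Π_y⁻ = |+i,+i⟩⟨+i,+i| + |−i,−i⟩⟨−i,−i|, written entrywise. -/
def PiYMinus : Matrix Q2 Q2 ℂ :=
  Matrix.of fun i j => (1/4 : ℂ) *
    (yph i.1 * yph i.2 * star (yph j.1) * star (yph j.2)
      + star (yph i.1) * star (yph i.2) * yph j.1 * yph j.2)

/-- The matrix ρ(a,b): diagonal (m00,m11,m22,m33), entry a between |00⟩,|11⟩,
entry b between |01⟩,|10⟩, zeros elsewhere. -/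
def rhoGen (m00 m11 m22 m33 a b : ℝ) : Matrix Q2 Q2 ℂ :=
  Matrix.of fun i j =>
    if i = j then
      (if i = (0, 0) then (m00 : ℂ) else if i = (0, 1) then (m11 : ℂ)
        else if i = (1, 0) then (m22 : ℂ) else (m33 : ℂ))
    else if (i = ((0 : Fin 2), (0 : Fin 2)) ∧ j = (1, 1)) ∨ (i = (1, 1) ∧ j = (0, 0)) then (a : ℂ)
    else if (i = ((0 : Fin 2), (1 : Fin 2)) ∧ j = (1, 0)) ∨ (i = (1, 0) ∧ j = (0, 1)) then (b : ℂ)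
    else 0

/-- The Bell-diagonal state with weights p0,p1,p2,p3 on |Φ⁺⟩,|Φ⁻⟩,|Ψ⁺⟩,|Ψ⁻⟩. -/
def bellDiag (p0 p1 p2 p3 : ℝ) : Matrix Q2 Q2 ℂ :=
  rhoGen ((p0 + p1)/2) ((p2 + p3)/2) ((p2 + p3)/2) ((p0 + p1)/2) ((p0 - p1)/2) ((p2 - p3)/2)

/-- Partial trace over the first qubit (A). -/
def trA (M : Matrix Q2 Q2 ℂ) : Matrix (Fin 2) (Fin 2) ℂ :=
  Matrix.of fun j j' => ∑ i : Fin 2, M (i, j) (i, j')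

/-- Partial trace over the second qubit (B). -/
def trB (M : Matrix Q2 Q2 ℂ) : Matrix (Fin 2) (Fin 2) ℂ :=
  Matrix.of fun i i' => ∑ j : Fin 2, M (i, j) (i', j)

/-- Coherence-based key-rate functional K(ρ) = C(Φ(ρ)) − H(Tr(Π⁻ρ)). -/
noncomputable def keyRate (ρ : Matrix Q2 Q2 ℂ) : ℝ :=
  relEntCoh (dephase ρ) - binEnt ((PiMinus * ρ).trace.re)

/-- Outer product |ψ⟩⟨ψ|. -/
def outer (ψ : Q2 → ℂ) : Matrix Q2 Q2 ℂ := Matrix.of fun i j => ψ i * star (ψ j)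

/-- Basis-optimized key rate: supremum of K over all local basis changes. -/
noncomputable def Km (ρ : Matrix Q2 Q2 ℂ) : ℝ :=
  sSup {x : ℝ | ∃ U V : Matrix (Fin 2) (Fin 2) ℂ, U ∈ Matrix.unitaryGroup (Fin 2) ℂ ∧
    V ∈ Matrix.unitaryGroup (Fin 2) ℂ ∧ x = keyRate ((U ⊗ₖ V) * ρ * (U ⊗ₖ V)ᴴ)}


/-! ### Parity-block-diagonal matrices and their spectrum -/

/-- The two-qubit basis split by `Z`-parity: `inl i` is `|i i⟩`, `inr i` is `|i (1-i)⟩`. -/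
def parityEquiv : Q2 ≃ Fin 2 ⊕ Fin 2 where
  toFun i := if i.1 = i.2 then Sum.inl i.1 else Sum.inr i.1
  invFun := Sum.elim (fun i => (i, i)) (fun i => (i, i + 1))
  left_inv := by decide
  right_inv := by decide

/-- The Hermitian `2 × 2` matrix with diagonal `(p, q)` and off-diagonal entry `z`. -/
def hermTwo (p q : ℝ) (z : ℂ) : Matrix (Fin 2) (Fin 2) ℂ :=
  !![(p : ℂ), z; star z, (q : ℂ)]

/-- The matrix that is block diagonal for `Z`-parity, with even block `hermTwo p s α` on
`|00⟩, |11⟩` and odd block `hermTwo q r β` on `|01⟩, |10⟩`. -/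
def xState (p q r s : ℝ) (α β : ℂ) : Matrix Q2 Q2 ℂ :=
  Matrix.reindex parityEquiv.symm parityEquiv.symm
    (Matrix.fromBlocks (hermTwo p s α) 0 0 (hermTwo q r β))

/-- Half the gap between the two eigenvalues of `hermTwo p q z`. -/
def gap (p q : ℝ) (z : ℂ) : ℝ := Real.sqrt (((p - q) / 2) ^ 2 + ‖z‖ ^ 2)

lemma gap_nonneg (p q : ℝ) (z : ℂ) : 0 ≤ gap p q z := Real.sqrt_nonneg _

lemma hermTwo_isHermitian (p q : ℝ) (z : ℂ) : (hermTwo p q z).IsHermitian := by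
  ext i j
  fin_cases i <;> fin_cases j <;> simp [hermTwo, Matrix.conjTranspose_apply]

lemma xState_isHermitian (p q r s : ℝ) (α β : ℂ) : (xState p q r s α β).IsHermitian := by
  unfold xState
  rw [Matrix.reindex_apply]
  refine Matrix.IsHermitian.submatrix ?_ _
  exact Matrix.IsHermitian.fromBlocks (hermTwo_isHermitian _ _ _) (by simp)
    (hermTwo_isHermitian _ _ _)

open Polynomial in
lemma hermTwo_charpoly (p q : ℝ) (z : ℂ) :
    (hermTwo p q z).charpoly =
      (X - C (((p + q) / 2 + gap p q z : ℝ) : ℂ)) *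
        (X - C (((p + q) / 2 - gap p q z : ℝ) : ℂ)) := by
  have hs : gap p q z ^ 2 = ((p - q) / 2) ^ 2 + ‖z‖ ^ 2 := Real.sq_sqrt (by positivity)
  have hz : z * star z = ((‖z‖ ^ 2 : ℝ) : ℂ) := by
    simpa using Complex.mul_conj' z
  have hprod : (((p + q) / 2 + gap p q z : ℝ) : ℂ) * (((p + q) / 2 - gap p q z : ℝ) : ℂ)
      = (p : ℂ) * q - z * star z := by
    rw [hz]
    norm_cast
    linear_combination -hs
  have htr : (((p + q) / 2 + gap p q z : ℝ) : ℂ) + (((p + q) / 2 - gap p q z : ℝ) : ℂ)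
      = (p : ℂ) + q := by
    norm_cast
    ring
  rw [Matrix.charpoly_fin_two]
  have h1 : (hermTwo p q z).trace = (p : ℂ) + q := by simp [hermTwo, Matrix.trace_fin_two]
  have h2 : (hermTwo p q z).det = (p : ℂ) * q - z * star z := by
    simp [hermTwo, Matrix.det_fin_two]
  rw [h1, h2, ← hprod, ← htr, C_add, C_mul]
  ring

/-- The eigenvalues of `xState`, as a multiset. -/
lemma xState_eigenvalues (p q r s : ℝ) (α β : ℂ) (h : (xState p q r s α β).IsHermitian) :
    Multiset.map h.eigenvalues Finset.univ.val =
      {(p + s) / 2 + gap p s α, (p + s) / 2 - gap p s α,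
        (q + r) / 2 + gap q r β, (q + r) / 2 - gap q r β} := by
  have h1 := h.roots_charpoly_eq_eigenvalues
  have h2 : (xState p q r s α β).charpoly.roots =
      Multiset.map Complex.ofReal {(p + s) / 2 + gap p s α, (p + s) / 2 - gap p s α,
        (q + r) / 2 + gap q r β, (q + r) / 2 - gap q r β} := by
    unfold xState
    rw [Matrix.charpoly_reindex, Matrix.charpoly_fromBlocks_zero₁₂, hermTwo_charpoly,
      hermTwo_charpoly]
    have hne := fun a b : ℂ => mul_ne_zero (Polynomial.X_sub_C_ne_zero a)
      (Polynomial.X_sub_C_ne_zero b)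
    rw [Polynomial.roots_mul (mul_ne_zero (hne _ _) (hne _ _)), Polynomial.roots_mul (hne _ _),
      Polynomial.roots_mul (hne _ _)]
    simp only [Polynomial.roots_X_sub_C]
    rfl
  rw [h2, ← Multiset.map_map] at h1
  exact (Multiset.map_injective Complex.ofReal_injective h1).symm

/-! ### Monotonicity of coherence in the off-diagonal entries -/

/-- Entropy (in nats) of the unnormalised spectrum `{c + t, c - t}`. -/
def pairEnt (c t : ℝ) : ℝ := Real.negMulLog (c + t) + Real.negMulLog (c - t)

lemma vnEntropy_xState (p q r s : ℝ) (α β : ℂ) :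
    vnEntropy (xState p q r s α β) =
      (pairEnt ((p + s) / 2) (gap p s α) + pairEnt ((q + r) / 2) (gap q r β)) / Real.log 2 := by
  have h := xState_isHermitian p q r s α β
  unfold vnEntropy
  rw [dif_pos h]
  have h1 : ∑ i, h.eigenvalues i * Real.logb 2 (h.eigenvalues i) =
      (Multiset.map (fun x : ℝ => x * Real.logb 2 x)
        (Multiset.map h.eigenvalues Finset.univ.val)).sum := by
    rw [Multiset.map_map]; rfl
  rw [h1, xState_eigenvalues]
  simp only [Multiset.insert_eq_cons, Multiset.map_cons, Multiset.map_singleton,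
    Multiset.sum_cons, Multiset.sum_singleton, pairEnt, Real.negMulLog, Real.logb]
  ring

/-- Spreading two points symmetrically about their mean lowers the entropy, by concavity of
`x ↦ -x log x`. -/
lemma pairEnt_anti {c t u : ℝ} (ht : 0 ≤ t) (htu : t ≤ u) (huc : u ≤ c) :
    pairEnt c u ≤ pairEnt c t := by
  rcases eq_or_lt_of_le (ht.trans htu) with hu | hu
  · obtain rfl : t = u := le_antisymm htu (hu ▸ ht)
    rfl
  -- `c ± t` are the convex combinations of `c ± u` with weights `(1 ± t / u) / 2`
  have hl : t / u ≤ 1 := (div_le_one hu).2 htu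
  have hl0 : 0 ≤ t / u := by positivity
  have htu' : t / u * u = t := div_mul_cancel₀ _ hu.ne'
  have hm : c + u ∈ Set.Ici (0 : ℝ) := by simp only [Set.mem_Ici]; linarith
  have hm' : c - u ∈ Set.Ici (0 : ℝ) := by simp only [Set.mem_Ici]; linarith
  have h1 := Real.concaveOn_negMulLog.2 hm hm' (show 0 ≤ (1 + t / u) / 2 by linarith)
    (show 0 ≤ (1 - t / u) / 2 by linarith) (by ring)
  have h2 := Real.concaveOn_negMulLog.2 hm hm' (show 0 ≤ (1 - t / u) / 2 by linarith)
    (show 0 ≤ (1 + t / u) / 2 by linarith) (by ring)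
  have e1 : (1 + t / u) / 2 * (c + u) + (1 - t / u) / 2 * (c - u) = c + t := by
    linear_combination htu'
  have e2 : (1 - t / u) / 2 * (c + u) + (1 + t / u) / 2 * (c - u) = c - t := by
    linear_combination -htu'
  simp only [smul_eq_mul, e1, e2] at h1 h2
  unfold pairEnt
  linarith

lemma gap_le {p q : ℝ} {z : ℂ} (hp : 0 ≤ p) (hq : 0 ≤ q) (hz : ‖z‖ ^ 2 ≤ p * q) :
    gap p q z ≤ (p + q) / 2 := by
  refine Real.sqrt_le_iff.2 ⟨by linarith, ?_⟩
  linarith [show ((p + q) / 2) ^ 2 = ((p - q) / 2) ^ 2 + p * q by ring]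

lemma gap_mono {p q : ℝ} {z w : ℂ} (h : ‖z‖ ≤ ‖w‖) : gap p q z ≤ gap p q w := by
  unfold gap
  gcongr

lemma diagPart_xState (p q r s : ℝ) (α β α' β' : ℂ) :
    diagPart (xState p q r s α β) = diagPart (xState p q r s α' β') := by
  unfold diagPart
  congr 1
  ext ⟨i, j⟩
  fin_cases i <;> fin_cases j <;> simp [xState, hermTwo, parityEquiv]

/-- With fixed diagonal, coherence grows with the moduli of the off-diagonal entries, as long as
these respect the bounds that positivity imposes. -/
lemma relEntCoh_mono {p q r s : ℝ} {α β α' β' : ℂ} (hp : 0 ≤ p) (hq : 0 ≤ q) (hr : 0 ≤ r)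
    (hs : 0 ≤ s) (hα : ‖α‖ ≤ ‖α'‖) (hβ : ‖β‖ ≤ ‖β'‖) (hα' : ‖α'‖ ^ 2 ≤ p * s)
    (hβ' : ‖β'‖ ^ 2 ≤ q * r) :
    relEntCoh (xState p q r s α β) ≤ relEntCoh (xState p q r s α' β') := by
  unfold relEntCoh
  rw [diagPart_xState p q r s α β α' β', vnEntropy_xState, vnEntropy_xState]
  have h1 := pairEnt_anti (gap_nonneg _ _ _) (gap_mono (p := p) (q := s) hα)
    (gap_le hp hs hα')
  have h2 := pairEnt_anti (gap_nonneg _ _ _) (gap_mono (p := q) (q := r) hβ)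
    (gap_le hq hr hβ')
  have h3 : 0 < Real.log 2 := Real.log_pos (by norm_num)
  gcongr

lemma xState_posSemidef {p q r s : ℝ} {α β : ℂ} (hp : 0 ≤ p) (hq : 0 ≤ q) (hr : 0 ≤ r)
    (hs : 0 ≤ s) (hα : ‖α‖ ^ 2 ≤ p * s) (hβ : ‖β‖ ^ 2 ≤ q * r) :
    (xState p q r s α β).PosSemidef := by
  have h := xState_isHermitian p q r s α β
  rw [h.posSemidef_iff_eigenvalues_nonneg]
  intro i
  have hi : h.eigenvalues i ∈ Multiset.map h.eigenvalues Finset.univ.val :=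
    Multiset.mem_map_of_mem _ (Finset.mem_univ i)
  rw [xState_eigenvalues] at hi
  have h1 := gap_le hp hs hα
  have h2 := gap_le hq hr hβ
  have h3 : 0 ≤ gap p s α := gap_nonneg _ _ _
  have h4 : 0 ≤ gap q r β := gap_nonneg _ _ _
  simp only [Multiset.insert_eq_cons, Multiset.mem_cons, Multiset.mem_singleton] at hi
  simp only [Pi.zero_apply]
  rcases hi with hi | hi | hi | hi <;> rw [hi] <;> linarith

/-! ### Dephasing, the phase-error constraint and positivity -/

lemma rhoGen_eq_xState (p q r s a b : ℝ) :
    rhoGen p q r s a b = xState p q r s a b := by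
  ext ⟨i, j⟩ ⟨k, l⟩
  fin_cases i <;> fin_cases j <;> fin_cases k <;> fin_cases l <;>
    simp [rhoGen, xState, hermTwo, parityEquiv]

lemma dephase_apply (ρ : Matrix Q2 Q2 ℂ) (i j : Q2) :
    dephase ρ i j = if (i.1 = i.2 ↔ j.1 = j.2) then ρ i j else 0 := by
  simp only [dephase, PiPlus, PiMinus, Matrix.add_apply, Matrix.mul_diagonal,
    Matrix.diagonal_mul]
  by_cases h1 : i.1 = i.2 <;> by_cases h2 : j.1 = j.2 <;> simp [h1, h2]

lemma dephase_eq_xState {ρ : Matrix Q2 Q2 ℂ} {p q r s : ℝ} (hρ : ρ.IsHermitian)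
    (hp : ρ (0,0) (0,0) = p) (hq : ρ (0,1) (0,1) = q) (hr : ρ (1,0) (1,0) = r)
    (hs : ρ (1,1) (1,1) = s) :
    dephase ρ = xState p q r s (ρ (0,0) (1,1)) (ρ (0,1) (1,0)) := by
  have h1 : ρ (1,1) (0,0) = star (ρ (0,0) (1,1)) := (hρ.apply _ _).symm
  have h2 : ρ (1,0) (0,1) = star (ρ (0,1) (1,0)) := (hρ.apply _ _).symm
  ext ⟨i, j⟩ ⟨k, l⟩
  rw [dephase_apply]
  fin_cases i <;> fin_cases j <;> fin_cases k <;> fin_cases l <;>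
    simp [xState, hermTwo, parityEquiv, hp, hq, hr, hs, h1, h2]

lemma trace_PiXMinus_mul {ρ : Matrix Q2 Q2 ℂ} (hρ : ρ.IsHermitian) (htr : ρ.trace = 1) :
    (PiXMinus * ρ).trace =
      ((1 / 2 - (ρ (0,0) (1,1)).re - (ρ (0,1) (1,0)).re : ℝ) : ℂ) := by
  have h1 : ρ (1,1) (0,0) = star (ρ (0,0) (1,1)) := (hρ.apply _ _).symm
  have h2 : ρ (1,0) (0,1) = star (ρ (0,1) (1,0)) := (hρ.apply _ _).symm
  have h3 : ∀ z : ℂ, (z.re : ℂ) = (z + star z) / 2 := fun z => Complex.re_eq_add_conj z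
  simp only [Matrix.trace, Matrix.diag, Fintype.sum_prod_type, Fin.sum_univ_two] at htr
  push_cast
  rw [h3, h3, ← h1, ← h2]
  simp [Matrix.trace, Matrix.mul_apply, Fintype.sum_prod_type, Fin.sum_univ_two, PiXMinus]
  linear_combination (1 / 2 : ℂ) * htr

/-- The `2 × 2` principal minors of a positive semidefinite matrix are nonnegative. -/
lemma norm_sq_le_of_posSemidef {n : Type*} {ρ : Matrix n n ℂ} (hρ : ρ.PosSemidef) (i j : n)
    {p q : ℝ} (hp : ρ i i = p) (hq : ρ j j = q) : ‖ρ i j‖ ^ 2 ≤ p * q := by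
  have h := (hρ.submatrix ![i, j]).det_nonneg
  have hji : ρ j i = star (ρ i j) := (hρ.1.apply _ _).symm
  have hz : ρ i j * star (ρ i j) = ((‖ρ i j‖ ^ 2 : ℝ) : ℂ) := by
    simpa using Complex.mul_conj' (ρ i j)
  rw [Matrix.det_fin_two] at h
  simp only [Matrix.submatrix_apply, Matrix.cons_val_zero, Matrix.cons_val_one, hp, hq, hji,
    hz] at h
  norm_cast at h
  linarith

lemma sq_le_of_abs_le_sqrt {a x : ℝ} (hx : 0 ≤ x) (h : |a| ≤ Real.sqrt x) :
    ‖(a : ℂ)‖ ^ 2 ≤ x := by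
  rw [Complex.norm_real, Real.norm_eq_abs]
  exact (Real.le_sqrt (abs_nonneg _) hx).1 h

/-- the fine-grained coherence minimization reduces to a real
two-parameter optimization. -/
theorem stmt_6 (m00 m11 m22 m33 ep : ℝ)
    (h00 : 0 ≤ m00) (h11 : 0 ≤ m11) (h22 : 0 ≤ m22) (h33 : 0 ≤ m33)
    (hsum : m00 + m11 + m22 + m33 = 1) (hep0 : 0 ≤ ep) (hep1 : ep ≤ 1)
    (hne : ∃ ρ : Matrix Q2 Q2 ℂ, IsDensity ρ ∧
      ρ (0,0) (0,0) = (m00 : ℂ) ∧ ρ (0,1) (0,1) = (m11 : ℂ) ∧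
      ρ (1,0) (1,0) = (m22 : ℂ) ∧ ρ (1,1) (1,1) = (m33 : ℂ) ∧
      (PiXMinus * ρ).trace = (ep : ℂ)) :
    sInf {x : ℝ | ∃ ρ : Matrix Q2 Q2 ℂ, IsDensity ρ ∧
        ρ (0,0) (0,0) = (m00 : ℂ) ∧ ρ (0,1) (0,1) = (m11 : ℂ) ∧
        ρ (1,0) (1,0) = (m22 : ℂ) ∧ ρ (1,1) (1,1) = (m33 : ℂ) ∧
        (PiXMinus * ρ).trace = (ep : ℂ) ∧ x = relEntCoh (dephase ρ)} =
    sInf {x : ℝ | ∃ a b : ℝ, a + b = 1/2 - ep ∧ |a| ≤ Real.sqrt (m00 * m33) ∧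
        |b| ≤ Real.sqrt (m11 * m22) ∧ x = relEntCoh (rhoGen m00 m11 m22 m33 a b)} := by
  have h03 : 0 ≤ m00 * m33 := mul_nonneg h00 h33
  have h12 : 0 ≤ m11 * m22 := mul_nonneg h11 h22
  set L := {x : ℝ | ∃ ρ : Matrix Q2 Q2 ℂ, IsDensity ρ ∧
        ρ (0,0) (0,0) = (m00 : ℂ) ∧ ρ (0,1) (0,1) = (m11 : ℂ) ∧
        ρ (1,0) (1,0) = (m22 : ℂ) ∧ ρ (1,1) (1,1) = (m33 : ℂ) ∧
        (PiXMinus * ρ).trace = (ep : ℂ) ∧ x = relEntCoh (dephase ρ)} with hL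
  set R := {x : ℝ | ∃ a b : ℝ, a + b = 1/2 - ep ∧ |a| ≤ Real.sqrt (m00 * m33) ∧
        |b| ≤ Real.sqrt (m11 * m22) ∧ x = relEntCoh (rhoGen m00 m11 m22 m33 a b)} with hR
  have hRL : R ⊆ L := by
    rintro x ⟨a, b, hab, ha, hb, rfl⟩
    have ha' := sq_le_of_abs_le_sqrt h03 ha
    have hb' := sq_le_of_abs_le_sqrt h12 hb
    have hH := xState_isHermitian m00 m11 m22 m33 a b
    have e0 : xState m00 m11 m22 m33 a b (0,0) (0,0) = m00 := by
      simp [xState, hermTwo, parityEquiv]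
    have e1 : xState m00 m11 m22 m33 a b (0,1) (0,1) = m11 := by
      simp [xState, hermTwo, parityEquiv]
    have e2 : xState m00 m11 m22 m33 a b (1,0) (1,0) = m22 := by
      simp [xState, hermTwo, parityEquiv]
    have e3 : xState m00 m11 m22 m33 a b (1,1) (1,1) = m33 := by
      simp [xState, hermTwo, parityEquiv]
    have ea : xState m00 m11 m22 m33 a b (0,0) (1,1) = a := by
      simp [xState, hermTwo, parityEquiv]
    have eb : xState m00 m11 m22 m33 a b (0,1) (1,0) = b := by
      simp [xState, hermTwo, parityEquiv]
    have htr : (xState m00 m11 m22 m33 a b).trace = 1 := by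
      simp only [Matrix.trace, Matrix.diag, Fintype.sum_prod_type, Fin.sum_univ_two, e0, e1, e2,
        e3]
      norm_cast
      linarith
    refine ⟨xState m00 m11 m22 m33 a b, ⟨xState_posSemidef h00 h11 h22 h33 ha' hb', htr⟩,
      e0, e1, e2, e3, ?_, ?_⟩
    · rw [trace_PiXMinus_mul hH htr, ea, eb]
      norm_cast
      linarith
    · rw [dephase_eq_xState hH e0 e1 e2 e3, ea, eb, rhoGen_eq_xState]
  have hLR : ∀ x ∈ L, ∃ y ∈ R, y ≤ x := by
    rintro x ⟨ρ, ⟨hρ, htr⟩, e0, e1, e2, e3, hx, rfl⟩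
    have hα := norm_sq_le_of_posSemidef hρ (0,0) (1,1) e0 e3
    have hβ := norm_sq_le_of_posSemidef hρ (0,1) (1,0) e1 e2
    refine ⟨_, ⟨(ρ (0,0) (1,1)).re, (ρ (0,1) (1,0)).re, ?_, ?_, ?_, rfl⟩, ?_⟩
    · rw [trace_PiXMinus_mul hρ.1 htr] at hx
      have := Complex.ofReal_injective hx
      linarith
    · exact (Complex.abs_re_le_norm _).trans (Real.le_sqrt_of_sq_le hα)
    · exact (Complex.abs_re_le_norm _).trans (Real.le_sqrt_of_sq_le hβ)
    · rw [rhoGen_eq_xState, dephase_eq_xState hρ.1 e0 e1 e2 e3]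
      refine relEntCoh_mono h00 h11 h22 h33 ?_ ?_ hα hβ
      · simpa using Complex.abs_re_le_norm (ρ (0,0) (1,1))
      · simpa using Complex.abs_re_le_norm (ρ (0,1) (1,0))
  have hLne : L.Nonempty := by
    obtain ⟨ρ, hd, e0, e1, e2, e3, hx⟩ := hne
    exact ⟨_, ρ, hd, e0, e1, e2, e3, hx, rfl⟩
  have hRne : R.Nonempty := by
    obtain ⟨x, hx⟩ := hLne
    obtain ⟨y, hy, -⟩ := hLR x hx
    exact ⟨y, hy⟩
  -- Monotonicity, compared with vanishing off-diagonal entries, bounds both sets from below.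
  have hRb : relEntCoh (xState m00 m11 m22 m33 0 0) ∈ lowerBounds R := by
    rintro x ⟨a, b, -, ha, hb, rfl⟩
    rw [rhoGen_eq_xState]
    exact relEntCoh_mono h00 h11 h22 h33 (by simp) (by simp) (sq_le_of_abs_le_sqrt h03 ha)
      (sq_le_of_abs_le_sqrt h12 hb)
  have hLb : relEntCoh (xState m00 m11 m22 m33 0 0) ∈ lowerBounds L := by
    intro x hx
    obtain ⟨y, hy, hyx⟩ := hLR x hx
    exact (hRb hy).trans hyx
  refine le_antisymm (csInf_le_csInf ⟨_, hLb⟩ hRne hRL) (le_csInf hLne fun x hx => ?_)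
  obtain ⟨y, hy, hyx⟩ := hLR x hx
  exact (csInf_le ⟨_, hRb⟩ hy).trans hyx

end
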